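/- Let P = Q·R where Q is a polynomial of degree n-k with all zeros in D⁺ and R is a complex polynomial of degree at most k, 1 ≤ k < n. Set δ := (2k/(n-k))^{1/2}. Then for every x ∈ [-1,1] outside a set of Lebesgue measure at most (70e + 8√2)·δ, one has |P'(x)/P(x)| ≥ ((n-k)k/2)^{1/2}. -/

import Mathlib

open Polynomial Set MeasureTheory

/-!
Kolmogorov's weak-type argument: if `f` is holomorphic in the lower half-plane with `0 ≤ im f`,
the Cayley transform carries it to the unit disc, where the mean value property of
`re (f / (f + aI)) ≥ 0`, Fatou's lemma and Chebyshev's inequality show that the boundary values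
satisfy `a ≤ ‖f x‖` on a subset of `[-1, 1]` of measure at most `4π‖f (-I)‖ / a`.

If all zeros of `P` have `0 ≤ im`, this applies to `P' / P`, of norm at most `deg P` at `-I`;
factoring `R` into a part with zeros above the real axis and a part with zeros below it,
`R' / R` is rarely large. By Gauss–Lucas it also applies to `-Q / Q'`, of norm at most
`2 / deg Q` at `-I` when the zeros of `Q` lie in the half-disc, so `Q' / Q` is rarely small.
Both bounds have constant `8π`, and `16π ≤ 70e + 8√2`.
-/

section RadialLimits

open Complex Filter Metric
open scoped ENNReal Real Topology

lemma measure_le_liminf_le_div {α : Type*} {m : MeasurableSpace α} {μ : Measure α}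
    {f : ℕ → α → ℝ≥0∞} (hf : ∀ n, Measurable (f n)) {C : ℝ≥0∞}
    (hC : ∀ n, ∫⁻ a, f n a ∂μ ≤ C) {t : ℝ≥0∞} (ht₀ : t ≠ 0) (ht : t ≠ ∞) :
    μ {a | t ≤ liminf (fun n => f n a) atTop} ≤ C / t := by
  have hfatou : ∫⁻ a, liminf (fun n => f n a) atTop ∂μ ≤ C :=
    (lintegral_liminf_le hf).trans <|
      (liminf_le_liminf (.of_forall hC)).trans_eq (liminf_const C)
  exact (meas_ge_le_lintegral_div (Measurable.liminf hf).aemeasurable ht₀ ht).trans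
    (ENNReal.div_le_div_right hfatou t)

lemma setLIntegral_ofReal_re_circleMap {h : ℂ → ℂ} {c : ℂ} {r : ℝ}
    (hd : DifferentiableOn ℂ h (closedBall c |r|)) (hre : ∀ z ∈ sphere c |r|, 0 ≤ (h z).re) :
    ∫⁻ θ in Ioc 0 (2 * π), ENNReal.ofReal (h (circleMap c r θ)).re =
      ENNReal.ofReal (2 * π * (h c).re) := by
  have hint : CircleIntegrable h c r :=
    (hd.continuousOn.mono sphere_subset_closedBall).circleIntegrable'
  have hint_re : CircleIntegrable (fun z => (h z).re) c r :=
    (continuous_re.comp_continuousOn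
      (hd.continuousOn.mono sphere_subset_closedBall)).circleIntegrable'
  have hmean : Real.circleAverage (fun z => (h z).re) c r = (h c).re := by
    rw [← (hd.diffContOnCl_ball subset_rfl).circleAverage]
    exact reCLM.circleAverage_comp_comm hint
  rw [← ofReal_integral_eq_lintegral_ofReal
      ((intervalIntegrable_iff_integrableOn_Ioc_of_le Real.two_pi_pos.le).1 hint_re)
      (.of_forall fun θ => hre _ (circleMap_mem_sphere' c r θ)),
    ← intervalIntegral.integral_of_le Real.two_pi_pos.le, ← hmean, Real.circleAverage_def,
    smul_eq_mul, mul_inv_cancel_left₀ Real.two_pi_pos.ne']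

variable {f : ℂ → ℂ} {c : ℂ} {R : ℝ} {r : ℕ → ℝ}

lemma volume_radialLimit_le_re_le (hd : DifferentiableOn ℂ f (ball c R))
    (hre : ∀ z ∈ ball c R, 0 ≤ (f z).re) (hr : ∀ n, |r n| < R) {t : ℝ} (ht : 0 < t) :
    volume {θ ∈ Ioc 0 (2 * π) |
        ∃ L : ℂ, t ≤ L.re ∧ Tendsto (fun n => f (circleMap c (r n) θ)) atTop (𝓝 L)} ≤
      ENNReal.ofReal (2 * π * (f c).re / t) := by
  have hsub n : closedBall c |r n| ⊆ ball c R := closedBall_subset_ball (hr n)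
  have hmeas n : Measurable fun θ => ENNReal.ofReal (f (circleMap c (r n) θ)).re :=
    (continuous_re.comp <| hd.continuousOn.comp_continuous (continuous_circleMap c (r n)) fun θ =>
      hsub n <| sphere_subset_closedBall <|
        circleMap_mem_sphere' c (r n) θ).measurable.ennreal_ofReal
  have hint n : ∫⁻ θ in Ioc 0 (2 * π), ENNReal.ofReal (f (circleMap c (r n) θ)).re ≤
      ENNReal.ofReal (2 * π * (f c).re) :=
    (setLIntegral_ofReal_re_circleMap (hd.mono (hsub n)) fun z hz =>
      hre z (hsub n (sphere_subset_closedBall hz))).le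
  rw [ENNReal.ofReal_div_of_pos ht]
  refine le_trans ?_ (measure_le_liminf_le_div hmeas hint (ENNReal.ofReal_pos.2 ht).ne'
    ENNReal.ofReal_ne_top)
  rw [Measure.restrict_apply (measurableSet_le measurable_const (Measurable.liminf hmeas)),
    inter_comm]
  refine measure_mono fun θ ⟨hθ, L, htL, hL⟩ => ⟨hθ, ?_⟩
  have hlim := ENNReal.tendsto_ofReal ((continuous_re.tendsto L).comp hL)
  exact (ENNReal.ofReal_le_ofReal htL).trans_eq hlim.liminf_eq.symm

variable {w : ℂ} {a : ℝ}

lemma add_mul_I_ne_zero_of_im_nonneg (hw : 0 ≤ w.im) (ha : 0 < a) : w + a * I ≠ 0 := by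
  intro h
  have him : w.im + a = 0 := by simpa using congrArg im h
  linarith

lemma re_div_add_mul_I (w : ℂ) (a : ℝ) :
    (w / (w + a * I)).re =
      (w.re ^ 2 + w.im * (w.im + a)) / (w.re ^ 2 + (w.im + a) ^ 2) := by
  have hnorm : normSq (w + a * I) = w.re ^ 2 + (w.im + a) ^ 2 := by
    simp [normSq_apply, sq]
  rw [div_re, hnorm, ← add_div]
  simp [sq]

lemma re_div_add_mul_I_nonneg (hw : 0 ≤ w.im) (ha : 0 < a) : 0 ≤ (w / (w + a * I)).re := by
  rw [re_div_add_mul_I]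
  positivity

lemma re_div_add_mul_I_le_norm_div (hw : 0 ≤ w.im) (ha : 0 < a) :
    (w / (w + a * I)).re ≤ ‖w‖ / a := by
  have hle : a ≤ ‖w + a * I‖ :=
    calc a ≤ (w + a * I).im := by simpa using hw
      _ ≤ ‖w + a * I‖ := im_le_norm _
  calc (w / (w + a * I)).re ≤ ‖w / (w + a * I)‖ := re_le_norm _
    _ = ‖w‖ / ‖w + a * I‖ := norm_div _ _
    _ ≤ ‖w‖ / a := by gcongr

lemma half_le_re_div_add_mul_I (hw : 0 ≤ w.im) (ha : 0 < a) (haw : a ≤ ‖w‖) :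
    1 / 2 ≤ (w / (w + a * I)).re := by
  have hsq : a ^ 2 ≤ w.re ^ 2 + w.im ^ 2 := by
    rw [← sq_norm_sub_sq_im w, sub_add_cancel]
    gcongr
  rw [re_div_add_mul_I, le_div_iff₀ (by positivity)]
  linarith

lemma volume_radialLimit_le_norm_le (hd : DifferentiableOn ℂ f (ball c R))
    (him : ∀ z ∈ ball c R, 0 ≤ (f z).im) (hr : ∀ n, |r n| < R) (ha : 0 < a) :
    volume {θ ∈ Ioc 0 (2 * π) |
        ∃ L : ℂ, a ≤ ‖L‖ ∧ Tendsto (fun n => f (circleMap c (r n) θ)) atTop (𝓝 L)} ≤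
      ENNReal.ofReal (4 * π * ‖f c‖ / a) := by
  have hmem n θ : circleMap c (r n) θ ∈ ball c R :=
    closedBall_subset_ball (hr n) <| sphere_subset_closedBall <| circleMap_mem_sphere' c (r n) θ
  have hc : c ∈ ball c R := mem_ball_self ((abs_nonneg _).trans_lt (hr 0))
  have hd' : DifferentiableOn ℂ (fun z => f z / (f z + a * I)) (ball c R) :=
    hd.div (hd.add_const _) fun z hz => add_mul_I_ne_zero_of_im_nonneg (him z hz) ha
  have hre z (hz : z ∈ ball c R) := re_div_add_mul_I_nonneg (him z hz) ha
  refine (measure_mono ?_).trans <|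
    (volume_radialLimit_le_re_le hd' hre hr one_half_pos).trans (ENNReal.ofReal_le_ofReal ?_)
  · rintro θ ⟨hθ, L, haL, hL⟩
    have hLim : 0 ≤ L.im :=
      ge_of_tendsto' ((continuous_im.tendsto L).comp hL) fun n => him _ (hmem n θ)
    exact ⟨hθ, _, half_le_re_div_add_mul_I hLim ha haL,
      hL.div (hL.add_const _) (add_mul_I_ne_zero_of_im_nonneg hLim ha)⟩
  · calc 2 * π * (f c / (f c + a * I)).re / (1 / 2)
        = 4 * π * (f c / (f c + a * I)).re := by ring
      _ ≤ 4 * π * (‖f c‖ / a) := by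
        gcongr
        exact re_div_add_mul_I_le_norm_div (him c hc) ha
      _ = 4 * π * ‖f c‖ / a := by ring

end RadialLimits

section CayleyTransform

open Complex Filter Metric
open scoped NNReal Real Topology

lemma volume_image_le_of_lipschitzOnWith {f : ℝ → ℝ} {s : Set ℝ} {K : ℝ≥0}
    (hf : LipschitzOnWith K f s) : volume (f '' s) ≤ K * volume s := by
  simpa [hausdorffMeasure_real] using hf.hausdorffMeasure_image_le zero_le_one

lemma hasDerivAt_cot {x : ℝ} (hx : Real.sin x ≠ 0) :
    HasDerivAt Real.cot (-1 / Real.sin x ^ 2) x := by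
  have hcot : Real.cot = fun y => Real.cos y / Real.sin y := funext Real.cot_eq_cos_div_sin
  rw [hcot]
  convert! (Real.hasDerivAt_cos x).div (Real.hasDerivAt_sin x) hx using 2
  linarith [Real.sin_sq_add_cos_sq x]

lemma lipschitzOnWith_cot_half :
    LipschitzOnWith 1 (fun θ => Real.cot (θ / 2)) (Icc (π / 2) (3 * π / 2)) := by
  have hsin θ (hθ : θ ∈ Icc (π / 2) (3 * π / 2)) : 1 / 2 ≤ Real.sin (θ / 2) ^ 2 := by
    have hcos : Real.cos θ ≤ 0 :=
      Real.cos_nonpos_of_pi_div_two_le_of_le hθ.1 (by linarith [hθ.2])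
    rw [Real.sin_sq_eq_half_sub, mul_div_cancel₀ θ two_ne_zero]
    linarith
  have hderiv θ (hθ : θ ∈ Icc (π / 2) (3 * π / 2)) :
      HasDerivAt (fun θ => Real.cot (θ / 2)) (-1 / Real.sin (θ / 2) ^ 2 * (1 / 2)) θ := by
    have hne : Real.sin (θ / 2) ≠ 0 := sq_pos_iff.1 (one_half_pos.trans_le (hsin θ hθ))
    exact (hasDerivAt_cot hne).comp θ ((hasDerivAt_id θ).div_const 2)
  refine (convex_Icc _ _).lipschitzOnWith_of_nnnorm_hasDerivWithin_le
    (fun θ hθ => (hderiv θ hθ).hasDerivWithinAt) fun θ hθ => ?_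
  have hpos : 0 < Real.sin (θ / 2) ^ 2 := one_half_pos.trans_le (hsin θ hθ)
  rw [← NNReal.coe_le_coe, coe_nnnorm, NNReal.coe_one, Real.norm_eq_abs, abs_mul, abs_div, abs_neg,
    abs_one, abs_of_pos hpos, abs_of_pos one_half_pos, div_mul_div_comm, one_mul,
    div_le_one (by positivity)]
  linarith [hsin θ hθ]

lemma Icc_subset_image_cot_half :
    Icc (-1) 1 ⊆ (fun θ => Real.cot (θ / 2)) '' Icc (π / 2) (3 * π / 2) := by
  intro x hx
  have hlow := Real.arctan_strictMono.monotone hx.1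
  have hupp := Real.arctan_strictMono.monotone hx.2
  rw [Real.arctan_neg, Real.arctan_one] at hlow
  rw [Real.arctan_one] at hupp
  refine ⟨π - 2 * Real.arctan x, ⟨by linarith, by linarith⟩, ?_⟩
  simp only [show (π - 2 * Real.arctan x) / 2 = π / 2 - Real.arctan x by ring,
    Real.cot_eq_cos_div_sin, Real.cos_pi_div_two_sub, Real.sin_pi_div_two_sub,
    ← Real.tan_eq_sin_div_cos, Real.tan_arctan]

/-- The Cayley transform of the unit disc onto the lower half-plane, normalised by `0 ↦ -I`. -/
noncomputable def cayley (ζ : ℂ) : ℂ := I * (ζ + 1) / (ζ - 1)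

lemma cayley_zero : cayley 0 = -I := by
  simp [cayley, div_neg]

lemma differentiableAt_cayley {ζ : ℂ} (hζ : ζ ≠ 1) : DifferentiableAt ℂ cayley ζ := by
  have := sub_ne_zero.2 hζ
  unfold cayley
  fun_prop (disch := assumption)

lemma im_cayley_neg {ζ : ℂ} (hζ : ζ ∈ ball 0 1) : (cayley ζ).im < 0 := by
  have hnorm : normSq ζ < 1 := by
    rw [normSq_eq_norm_sq, sq_lt_one_iff₀ (norm_nonneg ζ)]
    exact mem_ball_zero_iff.1 hζ
  have hne : ζ - 1 ≠ 0 := sub_ne_zero.2 fun h => by simp [h] at hnorm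
  have him : (cayley ζ).im = (normSq ζ - 1) / normSq (ζ - 1) := by
    rw [cayley, div_im, ← sub_div]
    congr 1
    simp only [normSq_apply, mul_re, mul_im, add_re, add_im, sub_re, sub_im, one_re, one_im, I_re,
      I_im]
    ring
  rw [him]
  exact div_neg_of_neg_of_pos (sub_neg.2 hnorm) (normSq_pos.2 hne)

lemma cayley_circleMap_zero_one (θ : ℝ) : cayley (circleMap 0 1 θ) = Real.cot (θ / 2) := by
  have harg : 2 * I * ((θ / 2 : ℝ) : ℂ) = θ * I := by push_cast; ring
  rw [ofReal_cot, cot_eq_exp_ratio, harg, cayley, circleMap_zero, ofReal_one, one_mul,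
    ← mul_div_mul_left _ _ I_ne_zero, ← mul_assoc I I, I_mul_I, neg_one_mul, ← neg_sub 1, mul_neg,
    neg_div_neg_eq]

lemma circleMap_zero_one_ne_one {θ : ℝ} (hθ : θ ∈ Icc (π / 2) (3 * π / 2)) :
    circleMap 0 1 θ ≠ 1 := by
  intro h
  have hcos : Real.cos θ = 1 := by
    simpa [circleMap_zero, exp_ofReal_mul_I_re] using congrArg re h
  have hcos' : Real.cos θ ≤ 0 :=
    Real.cos_nonpos_of_pi_div_two_le_of_le hθ.1 (by linarith [hθ.2])
  linarith

lemma tendsto_cayley_circleMap {θ : ℝ} (hθ : circleMap 0 1 θ ≠ 1) {r : ℕ → ℝ}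
    (hr : ∀ n, |r n| < 1) (hr_lim : Tendsto r atTop (𝓝 1)) :
    Tendsto (fun n => cayley (circleMap 0 (r n) θ)) atTop
      (𝓝[{w | w.im < 0}] (Real.cot (θ / 2) : ℂ)) := by
  have hradius : Continuous fun s : ℝ => circleMap 0 s θ := by
    unfold circleMap
    fun_prop
  have hlim := ((differentiableAt_cayley hθ).continuousAt.tendsto.comp
    (hradius.tendsto 1)).comp hr_lim
  rw [cayley_circleMap_zero_one] at hlim
  refine tendsto_nhdsWithin_iff.2 ⟨hlim, .of_forall fun n => im_cayley_neg ?_⟩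
  simpa using hr n

theorem volume_le_norm_le_of_im_nonneg {f : ℂ → ℂ} (hd : DifferentiableOn ℂ f {w | w.im < 0})
    (him : ∀ w : ℂ, w.im < 0 → 0 ≤ (f w).im) {a : ℝ} (ha : 0 < a) :
    volume {x ∈ Icc (-1 : ℝ) 1 | ContinuousWithinAt f {w | w.im < 0} x ∧ a ≤ ‖f x‖} ≤
      ENNReal.ofReal (4 * π * ‖f (-I)‖ / a) := by
  obtain ⟨r, -, hr, hr_lim⟩ := exists_seq_strictMono_tendsto' (zero_lt_one' ℝ)
  have hr_abs n : |r n| < 1 := by rw [abs_of_pos (hr n).1]; exact (hr n).2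
  have hcayley : DifferentiableOn ℂ cayley (ball 0 1) := fun ζ hζ =>
    (differentiableAt_cayley fun h => by simp [h] at hζ).differentiableWithinAt
  have hweak := volume_radialLimit_le_norm_le (hd.comp hcayley fun ζ => im_cayley_neg)
    (fun ζ hζ => him _ (im_cayley_neg hζ)) hr_abs ha
  rw [Function.comp_apply, cayley_zero] at hweak
  set A := {x ∈ Icc (-1 : ℝ) 1 | ContinuousWithinAt f {w | w.im < 0} x ∧ a ≤ ‖f x‖}
  set E := {θ ∈ Icc (π / 2) (3 * π / 2) | Real.cot (θ / 2) ∈ A}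
  have hAE : A ⊆ (fun θ => Real.cot (θ / 2)) '' E := fun x hx => by
    obtain ⟨θ, hθ, rfl⟩ := Icc_subset_image_cot_half hx.1
    exact ⟨θ, ⟨hθ, hx⟩, rfl⟩
  have hvol : volume A ≤ volume E := by
    simpa using (measure_mono hAE).trans
      (volume_image_le_of_lipschitzOnWith (lipschitzOnWith_cot_half.mono (sep_subset _ _)))
  refine hvol.trans ((measure_mono ?_).trans hweak)
  rintro θ ⟨hθ, -, hcont, hnorm⟩
  exact ⟨⟨by linarith [hθ.1, Real.pi_pos], by linarith [hθ.2, Real.pi_pos]⟩, _, hnorm,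
    hcont.tendsto.comp (tendsto_cayley_circleMap (circleMap_zero_one_ne_one hθ) hr_abs hr_lim)⟩

end CayleyTransform

section LogarithmicDerivative

open Complex
open scoped ComplexConjugate Real

lemma eval_derivative_mul_div_eval_mul {K : Type*} [Field K] {P Q : K[X]} {w : K}
    (h : (P * Q).eval w ≠ 0) :
    (P * Q).derivative.eval w / (P * Q).eval w =
      P.derivative.eval w / P.eval w + Q.derivative.eval w / Q.eval w := by
  rw [eval_mul] at h
  have hP := left_ne_zero_of_mul h
  have hQ := right_ne_zero_of_mul h
  rw [derivative_mul, eval_add, eval_mul, eval_mul, eval_mul]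
  field_simp

lemma norm_sub_norm_le_norm_eval_derivative_mul_div_eval_mul {K : Type*} [NormedField K]
    {P Q : K[X]} {w : K} (h : (P * Q).eval w ≠ 0) :
    ‖P.derivative.eval w / P.eval w‖ - ‖Q.derivative.eval w / Q.eval w‖ ≤
      ‖(P * Q).derivative.eval w / (P * Q).eval w‖ := by
  rw [eval_derivative_mul_div_eval_mul h]
  exact norm_sub_le_norm_add _ _

lemma exists_mul_eq_isRoot_of_splits {K : Type*} [Field K] {P : K[X]} (hP : P.Splits)
    (hP₀ : P ≠ 0) (p : K → Prop) :
    ∃ P₁ P₂ : K[X], P₁ * P₂ = P ∧ (∀ z, P₁.IsRoot z → p z) ∧ ∀ z, P₂.IsRoot z → ¬ p z := by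
  classical
  have hlc : P.leadingCoeff ≠ 0 := leadingCoeff_ne_zero.2 hP₀
  have hroot {s : Multiset K} {z : K} (hz : (s.map fun a => X - C a).prod.IsRoot z) : z ∈ s := by
    rw [← roots_multiset_prod_X_sub_C s]
    exact (mem_roots (monic_multiset_prod_of_monic s _ fun a _ => monic_X_sub_C a).ne_zero).2 hz
  refine ⟨C P.leadingCoeff * ((P.roots.filter p).map fun a => X - C a).prod,
    ((P.roots.filter (¬ p ·)).map fun a => X - C a).prod, ?_, fun z hz => ?_,
    fun z hz => (Multiset.mem_filter.1 (hroot hz)).2⟩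
  · rw [mul_assoc, ← Multiset.prod_add, ← Multiset.map_add, Multiset.filter_add_not]
    exact hP.eq_prod_roots.symm
  · rw [IsRoot, eval_mul, eval_C, mul_eq_zero_iff_left hlc] at hz
    exact (Multiset.mem_filter.1 (hroot hz)).2

lemma norm_eval_derivative_div_eval_le {K : Type*} [NormedField K] {P : K[X]} (hP : P.Splits)
    {w : K} {C : ℝ} (hC : 0 ≤ C) (h : ∀ z, P.IsRoot z → ‖1 / (w - z)‖ ≤ C) :
    ‖P.derivative.eval w / P.eval w‖ ≤ P.natDegree * C := by
  by_cases hPw : P.eval w = 0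
  · rw [hPw, div_zero, norm_zero]
    positivity
  rw [hP.eval_derivative_div_eval_of_ne_zero hPw, hP.natDegree_eq_card_roots, ← nsmul_eq_mul]
  refine (norm_multiset_sum_le _).trans ?_
  rw [Multiset.map_map, ← Multiset.card_map (norm ∘ fun z => 1 / (w - z))]
  refine Multiset.sum_le_card_nsmul _ C (Multiset.forall_mem_map_iff.2 fun z hz => ?_)
  exact h z (isRoot_of_mem_roots hz)

lemma natDegree_mul_le_im_eval_derivative_div_eval {P : ℂ[X]} {w : ℂ} (hPw : P.eval w ≠ 0)
    {m : ℝ} (h : ∀ z, P.IsRoot z → m ≤ (1 / (w - z)).im) :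
    P.natDegree * m ≤ (P.derivative.eval w / P.eval w).im := by
  have hP := IsAlgClosed.splits P
  rw [hP.eval_derivative_div_eval_of_ne_zero hPw, hP.natDegree_eq_card_roots, ← nsmul_eq_mul,
    ← coe_imAddGroupHom, map_multiset_sum, Multiset.map_map,
    ← Multiset.card_map (imAddGroupHom ∘ fun z => 1 / (w - z))]
  refine Multiset.card_nsmul_le_sum (Multiset.forall_mem_map_iff.2 fun z hz => ?_)
  exact h z (isRoot_of_mem_roots hz)

lemma ae_eval_ofReal_ne_zero {P : ℂ[X]} (hP : P ≠ 0) : ∀ᵐ x : ℝ, P.eval (x : ℂ) ≠ 0 := by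
  have hfin : {z : ℂ | P.IsRoot z}.Finite := finite_setOfPred_isRoot hP
  exact measure_eq_zero_iff_ae_notMem.1
    ((hfin.preimage ofReal_injective.injOn).measure_zero volume)

variable {P : ℂ[X]}

lemma eval_ne_zero_of_im_neg (hP : ∀ z, P.IsRoot z → 0 ≤ z.im) {w : ℂ} (hw : w.im < 0) :
    P.eval w ≠ 0 :=
  fun h => (hP w h).not_gt hw

lemma im_eval_derivative_div_eval_nonneg (hP : ∀ z, P.IsRoot z → 0 ≤ z.im) {w : ℂ}
    (hw : w.im < 0) : 0 ≤ (P.derivative.eval w / P.eval w).im := by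
  have hterm z (hz : P.IsRoot z) : 0 ≤ (1 / (w - z)).im := by
    have him : 0 ≤ -(w - z).im := by
      rw [sub_im]
      linarith [hP z hz]
    rw [one_div, inv_im]
    exact div_nonneg him (normSq_nonneg _)
  simpa using natDegree_mul_le_im_eval_derivative_div_eval (eval_ne_zero_of_im_neg hP hw) hterm

lemma im_nonneg_of_isRoot_derivative (hdeg : 0 < P.natDegree)
    (hP : ∀ z, P.IsRoot z → 0 ≤ z.im) (z : ℂ) (hz : P.derivative.IsRoot z) : 0 ≤ z.im := by
  have hP' : P.derivative ≠ 0 := mt derivative_eq_zero.1 hdeg.ne'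
  have hhull : convexHull ℝ (P.rootSet ℂ) ⊆ {w | 0 ≤ w.im} :=
    convexHull_min (fun w hw => hP w (by simpa using (mem_rootSet.1 hw).2))
      (convex_halfSpace_im_ge 0)
  exact hhull <| rootSet_derivative_subset_convexHull_rootSet
    (natDegree_pos_iff_degree_pos.1 hdeg) <| mem_rootSet.2 ⟨hP', by simpa using hz⟩

lemma norm_eval_derivative_div_eval_neg_I_le (hP : ∀ z, P.IsRoot z → 0 ≤ z.im) :
    ‖P.derivative.eval (-I) / P.eval (-I)‖ ≤ P.natDegree := by
  have hterm z (hz : P.IsRoot z) : ‖1 / (-I - z)‖ ≤ 1 := by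
    have hdist : 1 ≤ ‖-I - z‖ := by
      calc 1 ≤ |(-I - z).im| := by
            rw [sub_im, neg_im, I_im]
            exact le_abs.2 (.inr (by linarith [hP z hz]))
        _ ≤ ‖-I - z‖ := abs_im_le_norm _
    rw [norm_div, norm_one]
    exact div_le_one_of_le₀ hdist (norm_nonneg _)
  simpa using norm_eval_derivative_div_eval_le (IsAlgClosed.splits P) zero_le_one hterm

lemma natDegree_div_two_le_norm_eval_derivative_div_eval_neg_I
    (hP : ∀ z, P.IsRoot z → ‖z‖ ≤ 1 ∧ 0 ≤ z.im) :
    P.natDegree / 2 ≤ ‖P.derivative.eval (-I) / P.eval (-I)‖ := by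
  have hterm z (hz : P.IsRoot z) : 1 / 2 ≤ (1 / (-I - z)).im := by
    obtain ⟨hnorm, him⟩ := hP z hz
    have hsq : z.re ^ 2 + z.im ^ 2 ≤ 1 := by
      rw [← sq_norm_sub_sq_im z, sub_add_cancel]
      exact pow_le_one₀ (norm_nonneg z) hnorm
    have hval : (1 / (-I - z)).im = (1 + z.im) / (z.re ^ 2 + (1 + z.im) ^ 2) := by
      rw [one_div, inv_im, normSq_apply]
      simp only [sub_re, sub_im, neg_re, neg_im, I_re, I_im]
      ring_nf
    rw [hval, le_div_iff₀ (by positivity)]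
    linarith
  have hP_I : P.eval (-I) ≠ 0 := eval_ne_zero_of_im_neg (fun z hz => (hP z hz).2) (by simp)
  rw [div_eq_mul_one_div]
  exact (natDegree_mul_le_im_eval_derivative_div_eval hP_I hterm).trans (im_le_norm _)

lemma volume_le_norm_logDeriv_le_of_im_nonneg (hP : ∀ z, P.IsRoot z → 0 ≤ z.im) {a : ℝ}
    (ha : 0 < a) :
    volume {x ∈ Icc (-1 : ℝ) 1 | a ≤ ‖P.derivative.eval (x : ℂ) / P.eval (x : ℂ)‖} ≤
      ENNReal.ofReal (4 * π * P.natDegree / a) := by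
  have hd : DifferentiableOn ℂ (fun w => P.derivative.eval w / P.eval w) {w | w.im < 0} :=
    P.derivative.differentiable.differentiableOn.div P.differentiable.differentiableOn
      fun w => eval_ne_zero_of_im_neg hP
  refine (measure_mono ?_).trans <|
    (volume_le_norm_le_of_im_nonneg hd (fun w => im_eval_derivative_div_eval_nonneg hP) ha).trans
      (ENNReal.ofReal_le_ofReal ?_)
  · rintro x ⟨hx, hax⟩
    have hPx : P.eval (x : ℂ) ≠ 0 := (div_ne_zero_iff.1 (norm_pos_iff.1 (ha.trans_le hax))).2
    exact ⟨hx, (P.derivative.continuousAt.div P.continuousAt hPx).continuousWithinAt, hax⟩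
  · gcongr
    exact norm_eval_derivative_div_eval_neg_I_le hP

lemma volume_le_norm_logDeriv_le_of_im_nonpos (hP : ∀ z, P.IsRoot z → z.im ≤ 0) {a : ℝ}
    (ha : 0 < a) :
    volume {x ∈ Icc (-1 : ℝ) 1 | a ≤ ‖P.derivative.eval (x : ℂ) / P.eval (x : ℂ)‖} ≤
      ENNReal.ofReal (4 * π * P.natDegree / a) := by
  have heval (S : ℂ[X]) (z : ℂ) : (S.map (starRingEnd ℂ)).eval z = conj (S.eval (conj z)) := by
    rw [eval_map, ← eval₂_at_apply, conj_conj]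
  have hconj z (hz : (P.map (starRingEnd ℂ)).IsRoot z) : 0 ≤ z.im := by
    have hroot : P.IsRoot (conj z) := by simpa [IsRoot, heval] using hz
    simpa using hP _ hroot
  simpa [derivative_map, heval, ← map_div₀] using
    volume_le_norm_logDeriv_le_of_im_nonneg hconj ha

theorem volume_eval_eq_zero_or_le_norm_logDeriv_le (hP : P ≠ 0) {a : ℝ} (ha : 0 < a) :
    volume {x ∈ Icc (-1 : ℝ) 1 | P.eval (x : ℂ) = 0 ∨
        a ≤ ‖P.derivative.eval (x : ℂ) / P.eval (x : ℂ)‖} ≤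
      ENNReal.ofReal (8 * π * P.natDegree / a) := by
  obtain ⟨S, T, rfl, hS, hT⟩ :=
    exists_mul_eq_isRoot_of_splits (IsAlgClosed.splits P) hP (fun z => 0 ≤ z.im)
  set B : ℂ[X] → Set ℝ := fun F =>
    {x ∈ Icc (-1 : ℝ) 1 | a / 2 ≤ ‖F.derivative.eval (x : ℂ) / F.eval (x : ℂ)‖}
  have hBS : volume (B S) ≤ _ := volume_le_norm_logDeriv_le_of_im_nonneg hS (half_pos ha)
  have hBT : volume (B T) ≤ _ :=
    volume_le_norm_logDeriv_le_of_im_nonpos (fun z hz => (not_le.1 (hT z hz)).le) (half_pos ha)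
  calc
    _ ≤ volume (B S ∪ B T) := by
      refine measure_mono_ae ?_
      filter_upwards [ae_eval_ofReal_ne_zero hP] with x hPx ⟨hx, hxP⟩
      by_contra! hnot
      have hxS := not_le.1 fun h => hnot (.inl ⟨hx, h⟩)
      have hxT := not_le.1 fun h => hnot (.inr ⟨hx, h⟩)
      have hle := hxP.resolve_left hPx
      grw [eval_derivative_mul_div_eval_mul hPx, norm_add_le] at hle
      linarith
    _ ≤ ENNReal.ofReal (4 * π * S.natDegree / (a / 2)) +
        ENNReal.ofReal (4 * π * T.natDegree / (a / 2)) :=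
      (measure_union_le _ _).trans (add_le_add hBS hBT)
    _ = ENNReal.ofReal (8 * π * (S * T).natDegree / a) := by
      rw [← ENNReal.ofReal_add (by positivity) (by positivity),
        natDegree_mul (left_ne_zero_of_mul hP) (right_ne_zero_of_mul hP)]
      push_cast
      ring_nf

lemma volume_le_norm_eval_div_eval_derivative_le (hdeg : 0 < P.natDegree)
    (hP : ∀ z, P.IsRoot z → ‖z‖ ≤ 1 ∧ 0 ≤ z.im) {a : ℝ} (ha : 0 < a) :
    volume {x ∈ Icc (-1 : ℝ) 1 | a ≤ ‖P.eval (x : ℂ) / P.derivative.eval (x : ℂ)‖} ≤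
      ENNReal.ofReal (8 * π / (P.natDegree * a)) := by
  have him z (hz : P.IsRoot z) : 0 ≤ z.im := (hP z hz).2
  have hd : DifferentiableOn ℂ (fun w => -(P.eval w / P.derivative.eval w)) {w | w.im < 0} :=
    (P.differentiable.differentiableOn.div P.derivative.differentiable.differentiableOn
      fun w => eval_ne_zero_of_im_neg (im_nonneg_of_isRoot_derivative hdeg him)).neg
  have him_neg (w : ℂ) (hw : w.im < 0) : 0 ≤ (-(P.eval w / P.derivative.eval w)).im := by
    rw [← inv_div, neg_im, inv_im, neg_div, neg_neg]
    exact div_nonneg (im_eval_derivative_div_eval_nonneg him hw) (normSq_nonneg _)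
  refine (measure_mono ?_).trans <| (volume_le_norm_le_of_im_nonneg hd him_neg ha).trans
    (ENNReal.ofReal_le_ofReal ?_)
  · rintro x ⟨hx, hax⟩
    have hP'x : P.derivative.eval (x : ℂ) ≠ 0 :=
      (div_ne_zero_iff.1 (norm_pos_iff.1 (ha.trans_le hax))).2
    exact ⟨hx, (P.continuousAt.div P.derivative.continuousAt hP'x).neg.continuousWithinAt,
      by rwa [norm_neg]⟩
  · have : (0 : ℝ) < P.natDegree := Nat.cast_pos.2 hdeg
    calc 4 * π * ‖-(P.eval (-I) / P.derivative.eval (-I))‖ / a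
        = 4 * π * ‖P.derivative.eval (-I) / P.eval (-I)‖⁻¹ / a := by
          rw [norm_neg, ← norm_inv, inv_div]
      _ ≤ 4 * π * (P.natDegree / 2 : ℝ)⁻¹ / a := by
          gcongr
          exact natDegree_div_two_le_norm_eval_derivative_div_eval_neg_I hP
      _ = 8 * π / (P.natDegree * a) := by
          field_simp
          norm_num

theorem volume_norm_logDeriv_le_natDegree_mul_le (hdeg : 0 < P.natDegree)
    (hP : ∀ z, P.IsRoot z → ‖z‖ ≤ 1 ∧ 0 ≤ z.im) {δ : ℝ} (hδ : 0 < δ) :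
    volume {x ∈ Icc (-1 : ℝ) 1 |
        ‖P.derivative.eval (x : ℂ) / P.eval (x : ℂ)‖ ≤ P.natDegree * δ} ≤
      ENNReal.ofReal (8 * π * δ) := by
  have hN : (P.natDegree : ℝ) ≠ 0 := Nat.cast_ne_zero.2 hdeg.ne'
  have hbound : 8 * π / (P.natDegree * (P.natDegree * δ)⁻¹) = 8 * π * δ := by
    field_simp [hN]
  rw [← hbound]
  refine (measure_mono_ae ?_).trans
    (volume_le_norm_eval_div_eval_derivative_le hdeg hP (by positivity))
  filter_upwards [ae_eval_ofReal_ne_zero (ne_zero_of_natDegree_gt hdeg),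
    ae_eval_ofReal_ne_zero (mt derivative_eq_zero.1 hdeg.ne')] with x hPx hP'x ⟨hx, hle⟩
  refine ⟨hx, ?_⟩
  rw [← inv_div, norm_inv]
  exact inv_anti₀ (norm_pos_iff.2 (div_ne_zero hP'x hPx)) hle

theorem exists_volume_le_forall_le_norm_logDeriv_mul {Q R : ℂ[X]} (hdeg : 0 < Q.natDegree)
    (hQ : ∀ z, Q.IsRoot z → ‖z‖ ≤ 1 ∧ 0 ≤ z.im) (hR : R ≠ 0) {a : ℝ} (ha : 0 < a) :
    ∃ H : Set ℝ,
      volume H ≤ ENNReal.ofReal (8 * π * (2 * a / Q.natDegree) + 8 * π * (R.natDegree / a)) ∧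
      ∀ x ∈ Icc (-1 : ℝ) 1 \ H, (Q * R).eval (x : ℂ) ≠ 0 ∧
        a ≤ ‖(Q * R).derivative.eval (x : ℂ) / (Q * R).eval (x : ℂ)‖ := by
  have hN : (0 : ℝ) < Q.natDegree := Nat.cast_pos.2 hdeg
  have hHQ := volume_norm_logDeriv_le_natDegree_mul_le hdeg hQ (div_pos (mul_pos two_pos ha) hN)
  have hHR := volume_eval_eq_zero_or_le_norm_logDeriv_le hR ha
  rw [mul_div_cancel₀ _ hN.ne'] at hHQ
  refine ⟨_ ∪ _, (measure_union_le _ _).trans ((add_le_add hHQ hHR).trans_eq ?_), ?_⟩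
  · rw [ENNReal.ofReal_add (by positivity) (by positivity), mul_div_assoc (8 * π) _ a]
  · rintro x ⟨hx, hxH⟩
    have hxQ := not_le.1 fun h => hxH (.inl ⟨hx, h⟩)
    obtain ⟨hRx, hxR⟩ := not_or.1 fun h => hxH (.inr ⟨hx, h⟩)
    have hQx := (div_ne_zero_iff.1 (norm_pos_iff.1 ((mul_pos two_pos ha).trans hxQ))).2
    have hQRx : (Q * R).eval (x : ℂ) ≠ 0 := by
      rw [eval_mul]
      exact mul_ne_zero hQx hRx
    have hle := norm_sub_norm_le_norm_eval_derivative_mul_div_eval_mul hQRx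
    exact ⟨hQRx, by linarith [not_le.1 hxR]⟩

end LogarithmicDerivative

lemma div_sqrt_mul_div_two {k : ℝ} (hk : 0 ≤ k) (N : ℝ) :
    k / √(N * k / 2) = √(2 * k / N) := by
  rw [← Real.sqrt_sq hk, ← Real.sqrt_div (by positivity), Real.sqrt_sq hk]
  congr 1
  field_simp

lemma two_mul_sqrt_mul_div_two_div {N : ℝ} (hN : 0 ≤ N) (k : ℝ) :
    2 * √(N * k / 2) / N = √(2 * k / N) := by
  nth_rewrite 2 [← Real.sqrt_sq hN]
  rw [← Real.sqrt_sq zero_le_two, ← Real.sqrt_mul (by positivity),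
    ← Real.sqrt_div' _ (by positivity), Real.sqrt_sq zero_le_two]
  congr 1
  field_simp

theorem log_deriv_outside_small_set (n k : ℕ) (hk : 1 ≤ k) (hkn : k < n)
    (Q : Polynomial ℂ) (hQ0 : Q ≠ 0) (hQdeg : Q.natDegree = n - k)
    (hQz : ∀ z : ℂ, Q.IsRoot z → ‖z‖ ≤ 1 ∧ 0 ≤ z.im)
    (R : Polynomial ℂ) (hR0 : R ≠ 0) (hRdeg : R.natDegree ≤ k) :
    ∃ H : Set ℝ,
      volume H ≤ ENNReal.ofReal
        ((70 * Real.exp 1 + 8 * Real.sqrt 2) * Real.sqrt (2 * (k:ℝ) / ((n:ℝ) - (k:ℝ)))) ∧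
      ∀ x ∈ Icc (-1:ℝ) 1 \ H, (Q * R).eval (x : ℂ) ≠ 0 ∧
        Real.sqrt (((n:ℝ) - (k:ℝ)) * (k:ℝ) / 2) ≤
          ‖(Polynomial.derivative (Q * R)).eval (x : ℂ) / (Q * R).eval (x : ℂ)‖ := by
  have hN : (n : ℝ) - k = Q.natDegree := by rw [hQdeg, Nat.cast_sub hkn.le]
  have hdeg : 0 < Q.natDegree := by omega
  rw [hN]
  set δ := √(2 * k / (Q.natDegree : ℝ))
  set a := √((Q.natDegree : ℝ) * k / 2)
  have haN : 2 * a / Q.natDegree = δ := two_mul_sqrt_mul_div_two_div Q.natDegree.cast_nonneg k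
  have hka : k / a = δ := div_sqrt_mul_div_two k.cast_nonneg Q.natDegree
  have ha : 0 < a := by positivity
  obtain ⟨H, hH, hbound⟩ := exists_volume_le_forall_le_norm_logDeriv_mul hdeg hQz hR0 ha
  refine ⟨H, hH.trans (ENNReal.ofReal_le_ofReal ?_), hbound⟩
  calc 8 * Real.pi * (2 * a / Q.natDegree) + 8 * Real.pi * (R.natDegree / a)
      ≤ 8 * Real.pi * (2 * a / Q.natDegree) + 8 * Real.pi * (k / a) := by gcongr
    _ = 16 * Real.pi * δ := by rw [haN, hka]; ring
    _ ≤ (70 * Real.exp 1 + 8 * √2) * δ := by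
      gcongr
      linarith [Real.pi_le_four, Real.add_one_le_exp 1, Real.sqrt_nonneg 2]
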